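/- Let α > 1 and let ω(t) be a solution of the linearized Euler equation ∂ₜω = −sin y ∂ₓ(1 + Δ⁻¹)ω on 𝕋_α with ω(0) ∈ X ∩ H¹(𝕋_α). Then there exists a constant C such that ‖ω(t)‖_{H¹} ≤ C(1 + t) ‖ω(0)‖_{H¹} for all t ≥ 0. -/

import Mathlib

/-!
The operator `L = 1 + Δ⁻¹` is positive on non-shear functions: for a vorticity `θ` with stream function
`φ` (so `Δφ = -θ`), Green's identity and Wirtinger's inequality in `x`, where the period is `2π/α`, give
`∫ θφ ≤ α⁻² ∫ θ²`, hence `(1 - α⁻²) ∫ θ² ≤ ⟨Lθ, θ⟩ ≤ ∫ θ²` (`Pair.le_energy`, `Pair.energy_le`), and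
`1 - α⁻² > 0` because `α > 1`.

Since `J = -sin y ∂ₓ` is antisymmetric, `⟨Lθ, θ⟩` is conserved by `∂ₜθ = JLθ`, and a source `g` contributes
`2⟨Lθ, g⟩` to its derivative (`Pair.hasDerivAt_energy`). Both `ω` and `∂ₓω` solve the equation without
source, so their `L²` norms are bounded by multiples of their initial values. The derivative `∂_yω` solves
it with source `-cos y (∂ₓω - ∂ₓψ)`, whose `L²` norm is bounded in time by a multiple of the initial `H¹`
norm `H`. Therefore `F = ⟨L∂_yω, ∂_yω⟩ + H²` satisfies `F' ≤ 2KH√F`, so `√F` grows at most linearly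
(`sqrt_growth`), which is the claim (`H1_sq_bound`).
-/


/-!
Growth estimate for the linearized Euler equation at the Kolmogorov flow
(Lemma 2.3): ‖ω(t)‖_{H¹} ≤ C(1 + t)‖ω(0)‖_{H¹}.
-/

noncomputable section
open Real MeasureTheory Set

def pdx (f : ℝ → ℝ → ℝ) : ℝ → ℝ → ℝ := fun x y => deriv (fun x' => f x' y) x

def pdy (f : ℝ → ℝ → ℝ) : ℝ → ℝ → ℝ := fun x y => deriv (fun y' => f x y') y

def plap (f : ℝ → ℝ → ℝ) : ℝ → ℝ → ℝ := fun x y => pdx (pdx f) x y + pdy (pdy f) x y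

def Periodic2 (α : ℝ) (f : ℝ → ℝ → ℝ) : Prop :=
  (∀ x y, f (x + 2 * π / α) y = f x y) ∧ ∀ x y, f x (y + 2 * π) = f x y

def Smooth2 (f : ℝ → ℝ → ℝ) : Prop :=
  ContDiff ℝ (⊤ : ℕ∞) fun p : ℝ × ℝ => f p.1 p.2

def Smooth3 (f : ℝ → ℝ → ℝ → ℝ) : Prop :=
  ContDiff ℝ (⊤ : ℕ∞) fun p : ℝ × ℝ × ℝ => f p.1 p.2.1 p.2.2

def integT (α : ℝ) (f : ℝ → ℝ → ℝ) : ℝ :=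
  ∫ x in (0:ℝ)..(2 * π / α), ∫ y in (0:ℝ)..(2 * π), f x y

def H1normSq (α : ℝ) (f : ℝ → ℝ → ℝ) : ℝ :=
  integT α fun x y => (f x y) ^ 2 + (pdx f x y) ^ 2 + (pdy f x y) ^ 2

def NonShear (α : ℝ) (f : ℝ → ℝ → ℝ) : Prop :=
  ∀ y, (∫ x in (0:ℝ)..(2 * π / α), f x y) = 0

def IsStream (α : ℝ) (ω ψ : ℝ → ℝ → ℝ) : Prop :=
  Periodic2 α ψ ∧ Smooth2 ψ ∧ ∀ x y, plap ψ x y = -ω x y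

def pdt (f : ℝ → ℝ → ℝ → ℝ) : ℝ → ℝ → ℝ → ℝ := fun t x y => deriv (fun s => f s x y) t

/-- solution of the linearized Euler equation
∂ₜω = −sin y ∂ₓ(1 + Δ⁻¹)ω = −sin y (∂ₓω − ∂ₓψ) -/
def IsLinEulerSol (α : ℝ) (ω ψ : ℝ → ℝ → ℝ → ℝ) : Prop :=
  Smooth3 ω ∧ Smooth3 ψ ∧ (∀ t, Periodic2 α (ω t)) ∧ (∀ t, IsStream α (ω t) (ψ t)) ∧
    ∀ t x y, pdt ω t x y = -Real.sin y * (pdx (ω t) x y - pdx (ψ t) x y)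

/-! ### One-dimensional inequalities and parametric integrals -/

/-- **Wirtinger's inequality** with the sharp constant, by Parseval: integration by parts multiplies the
`n`-th Fourier coefficient by `2πin/T`, and the zeroth one vanishes. Sharpness matters, because for
`α` close to `1` any loss would destroy coercivity of the energy. -/
lemma wirtinger {T : ℝ} (hT : 0 < T) {f f' : ℝ → ℝ} (hf : ∀ x, HasDerivAt f (f' x) x)
    (hf' : Continuous f') (hper : f T = f 0) (hmean : ∫ x in (0:ℝ)..T, f x = 0) :
    ∫ x in (0:ℝ)..T, f x ^ 2 ≤ (T / (2 * π)) ^ 2 * ∫ x in (0:ℝ)..T, f' x ^ 2 := by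
  have hfc : Continuous f := continuous_iff_continuousAt.2 fun x => (hf x).continuousAt
  have memLp : ∀ g : ℝ → ℝ, Continuous g →
      MemLp (fun x => (g x : ℂ)) 2 (volume.restrict (Ioc 0 T)) := fun g hg => by
    obtain ⟨C, hC⟩ := (isCompact_Icc (a := (0:ℝ)) (b := T)).exists_bound_of_continuousOn hg.continuousOn
    refine MemLp.of_bound (Complex.continuous_ofReal.comp hg).aestronglyMeasurable C ?_
    refine (ae_restrict_iff' measurableSet_Ioc).2 (Filter.Eventually.of_forall fun x hx => ?_)
    simpa using hC x (Ioc_subset_Icc_self hx)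
  have P := hasSum_sq_fourierCoeffOn hT (memLp f hfc)
  have P' := hasSum_sq_fourierCoeffOn hT (memLp f' hf')
  simp only [Complex.norm_real, Real.norm_eq_abs, sq_abs, sub_zero, smul_eq_mul] at P P'
  have hcoef : ∀ n : ℤ, ‖fourierCoeffOn hT (fun x => (f x : ℂ)) n‖ ^ 2 ≤
      (T / (2 * π)) ^ 2 * ‖fourierCoeffOn hT (fun x => (f' x : ℂ)) n‖ ^ 2 := fun n => by
    rcases eq_or_ne n 0 with rfl | hn
    · have : fourierCoeffOn hT (fun x => (f x : ℂ)) 0 = 0 := by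
        rw [fourierCoeffOn_eq_integral]
        simp [intervalIntegral.integral_ofReal, hmean]
      rw [this]; simp; positivity
    · rw [fourierCoeffOn_of_hasDerivAt hT hn (fun x _ => (hf x).ofReal_comp)
        ((Complex.continuous_ofReal.comp hf').intervalIntegrable _ _)]
      have h1 : (1:ℝ) ≤ |(n:ℝ)| := by exact_mod_cast Int.one_le_abs hn
      simp only [hper, sub_self, mul_zero, zero_sub, sub_zero, norm_mul, norm_div, norm_neg,
        norm_one, Complex.norm_real, Complex.norm_I, Complex.norm_intCast, Complex.norm_ofNat,
        Real.norm_eq_abs, abs_of_pos pi_pos, abs_of_pos hT, Complex.ofReal_zero]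
      rw [mul_pow, mul_pow, ← mul_assoc, ← mul_pow]
      gcongr
      rw [mul_one, one_div_mul_eq_div]
      exact div_le_div_of_nonneg_left hT.le (by positivity)
        (le_mul_of_one_le_right (by positivity) h1)
  have := hasSum_le hcoef P (P'.mul_left _)
  have hTi : 0 < T⁻¹ := by positivity
  rw [mul_left_comm] at this
  exact le_of_mul_le_mul_left this hTi

/-- On a single line `y = const`. Since `θ` has mean zero, `φ` may be replaced by `φ` minus its mean;
then Young's and Wirtinger's inequalities apply. -/
lemma slice_bound {T : ℝ} (hT : 0 < T) {θ φ φ' : ℝ → ℝ} (hθ : Continuous θ)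
    (hφ : ∀ x, HasDerivAt φ (φ' x) x) (hφ' : Continuous φ') (hper : φ T = φ 0)
    (hmean : ∫ x in (0:ℝ)..T, θ x = 0) :
    ∫ x in (0:ℝ)..T, θ x * φ x ≤
      ∫ x in (0:ℝ)..T, ((T / (2 * π)) ^ 2 / 2 * θ x ^ 2 + 1 / 2 * φ' x ^ 2) := by
  have hφc : Continuous φ := continuous_iff_continuousAt.2 fun x => (hφ x).continuousAt
  set m : ℝ := (∫ x in (0:ℝ)..T, φ x) / T with hm
  set β : ℝ := T / (2 * π) with hβ
  have hβ0 : 0 < β := by positivity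
  have II : ∀ {g : ℝ → ℝ}, Continuous g → IntervalIntegrable g volume 0 T :=
    fun hg => hg.intervalIntegrable _ _
  have hW := wirtinger hT (f := fun x => φ x - m) (fun x => (hφ x).sub_const m) hφ' (by simp [hper])
    (by rw [intervalIntegral.integral_sub (II hφc) (II continuous_const)]
        simp [hm]; field_simp; ring)
  have e1 : ∫ x in (0:ℝ)..T, θ x * φ x = ∫ x in (0:ℝ)..T, θ x * (φ x - m) := by
    simp_rw [mul_sub]
    rw [intervalIntegral.integral_sub (II (by fun_prop)) (II (by fun_prop)),
      intervalIntegral.integral_mul_const, hmean]; ring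
  have e2 : ∫ x in (0:ℝ)..T, θ x * (φ x - m) ≤
      ∫ x in (0:ℝ)..T, (β ^ 2 / 2 * θ x ^ 2 + (β ^ 2)⁻¹ / 2 * (φ x - m) ^ 2) := by
    refine intervalIntegral.integral_mono hT.le (II (by fun_prop)) (II (by fun_prop)) fun x => ?_
    have : 0 ≤ (β * θ x - β⁻¹ * (φ x - m)) ^ 2 := sq_nonneg _
    have h2 : β * β⁻¹ = 1 := mul_inv_cancel₀ hβ0.ne'
    simp only [← inv_pow]
    clear_value m β
    linear_combination (1/2) * this - (θ x * (φ x - m)) * h2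
  rw [intervalIntegral.integral_add (II (by fun_prop)) (II (by fun_prop)),
    intervalIntegral.integral_const_mul, intervalIntegral.integral_const_mul] at e2
  rw [e1, intervalIntegral.integral_add (II (by fun_prop)) (II (by fun_prop)),
    intervalIntegral.integral_const_mul, intervalIntegral.integral_const_mul]
  refine e2.trans ?_
  have : (β ^ 2)⁻¹ / 2 * ∫ x in (0:ℝ)..T, (φ x - m) ^ 2 ≤
    (β ^ 2)⁻¹ / 2 * (β ^ 2 * ∫ x in (0:ℝ)..T, φ' x ^ 2) := by gcongr
  have h3 : (β ^ 2)⁻¹ / 2 * (β ^ 2 * ∫ x in (0:ℝ)..T, φ' x ^ 2) = 1/2 * ∫ x in (0:ℝ)..T, φ' x ^ 2 := by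
    field_simp
  linarith


/-- Differentiation under the integral sign over a compact set. -/
lemma hasDerivAt_param {E : Type*} [TopologicalSpace E] [MeasurableSpace E] [OpensMeasurableSpace E]
    [SecondCountableTopology E] 
    {μ : Measure E} [IsFiniteMeasureOnCompacts μ] {K : Set E} (hK : IsCompact K)
    (hKm : MeasurableSet K) {F F' : ℝ → E → ℝ} (hF : ∀ t, Continuous (F t))
    (hF' : Continuous fun p : ℝ × E => F' p.1 p.2)
    (h : ∀ t x, HasDerivAt (fun s => F s x) (F' t x) t) (t : ℝ) :
    HasDerivAt (fun s => ∫ x in K, F s x ∂μ) (∫ x in K, F' t x ∂μ) t := by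
  obtain ⟨C, hC⟩ := ((isCompact_Icc (a := t - 1) (b := t + 1)).prod hK).exists_bound_of_continuousOn
    hF'.continuousOn
  have hK' : μ K < ⊤ := hK.measure_lt_top
  have : IsFiniteMeasure (μ.restrict K) := ⟨by simpa using hK'⟩
  refine (hasDerivAt_integral_of_dominated_loc_of_deriv_le (s := Icc (t-1) (t+1))
    (bound := fun _ => C) (Icc_mem_nhds (by linarith) (by linarith)) ?_ ?_ ?_ ?_ ?_ ?_).2
  · exact Filter.Eventually.of_forall fun s => (hF s).aestronglyMeasurable
  · exact ((hF t).continuousOn.integrableOn_compact' hK hKm)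
  · exact (hF'.comp (by fun_prop : Continuous fun x : E => (t, x))).aestronglyMeasurable
  · refine (ae_restrict_iff' hKm).2 (Filter.Eventually.of_forall fun x hx s hs => hC (s, x) ⟨hs, hx⟩)
  · exact integrable_const C
  · exact Filter.Eventually.of_forall fun x s _ => h s x

/-! ### Directional derivatives in space-time -/

/-- Unit vector in the time direction; points of `ℝ × ℝ × ℝ` are read as `(t, x, y)`. -/
def et : ℝ × ℝ × ℝ := (1, 0, 0)
/-- Unit vector in the `x` direction. -/
def ex : ℝ × ℝ × ℝ := (0, 1, 0)
/-- Unit vector in the `y` direction. -/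
def ey : ℝ × ℝ × ℝ := (0, 0, 1)

/-- Directional derivative of `F` along the constant vector `v`. -/
def dirD (v : ℝ × ℝ × ℝ) (F : ℝ × ℝ × ℝ → ℝ) : ℝ × ℝ × ℝ → ℝ := fun p => fderiv ℝ F p v

/-- Smoothness (`C^∞`) of a function of `(t, x, y)`. -/
abbrev Sm (F : ℝ × ℝ × ℝ → ℝ) : Prop := ContDiff ℝ (⊤ : ℕ∞) F

/-- Periodicity in `x` (period `2π/α`) and in `y` (period `2π`) at every time. -/
def Per (α : ℝ) (F : ℝ × ℝ × ℝ → ℝ) : Prop :=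
  (∀ p, F (p + (0, 2 * π / α, 0)) = F p) ∧ ∀ p, F (p + (0, 0, 2 * π)) = F p

/-- The non-shear condition at every time: the mean in `x` vanishes on each line `y = const`. -/
def MeanZero (α : ℝ) (F : ℝ × ℝ × ℝ → ℝ) : Prop :=
  ∀ t y, ∫ x in (0:ℝ)..(2 * π / α), F (t, x, y) = 0

/-- Integral of the time slice `F (t, ·, ·)` over the period cell. The double integral over a
rectangle is used here so that linearity and differentiation in `t` come from the general theory;
`rectInt_eq_xy` and `rectInt_eq_yx` give the iterated integrals. -/
def rectInt (α : ℝ) (F : ℝ × ℝ × ℝ → ℝ) (t : ℝ) : ℝ :=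
  ∫ q in Icc (0:ℝ) (2 * π / α) ×ˢ Icc (0:ℝ) (2 * π), F (t, q.1, q.2)

section

variable {α : ℝ} {F G : ℝ × ℝ × ℝ → ℝ}

lemma Sm.diff (hF : Sm F) : Differentiable ℝ F := hF.differentiable (by simp)

lemma Sm.D (hF : Sm F) (v) : Sm (dirD v F) :=
  (hF.fderiv_right (m := (⊤ : ℕ∞)) (by simp)).clm_apply contDiff_const

lemma sm_sin : Sm fun p => sin p.2.2 := by unfold Sm; fun_prop
lemma sm_cos : Sm fun p => cos p.2.2 := by unfold Sm; fun_prop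

lemma dirD_comm (hF : Sm F) (v w) : dirD v (dirD w F) = dirD w (dirD v F) := by
  have h2 : Differentiable ℝ (fderiv ℝ F) :=
    (hF.fderiv_right (m := (⊤ : ℕ∞)) (by simp)).differentiable (by simp)
  have key : ∀ v w p, dirD v (dirD w F) p = fderiv ℝ (fderiv ℝ F) p v w := fun v w p => by
    have := ((h2 p).hasFDerivAt.clm_apply (hasFDerivAt_const w p)).fderiv
    unfold dirD
    rw [this]; simp
  funext p
  rw [key, key]
  exact (hF.contDiffAt.isSymmSndFDerivAt (by
    rw [minSmoothness_of_isRCLikeNormedField]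
    exact WithTop.coe_le_coe.2 (le_top : (2 : ℕ∞) ≤ ⊤))) v w

lemma dirD_add (hF : Sm F) (hG : Sm G) (v p) : dirD v (fun p => F p + G p) p = dirD v F p + dirD v G p := by
  simp [dirD, fderiv_fun_add (hF.diff p) (hG.diff p)]

lemma dirD_sub (hF : Sm F) (hG : Sm G) (v p) : dirD v (fun p => F p - G p) p = dirD v F p - dirD v G p := by
  simp [dirD, fderiv_fun_sub (hF.diff p) (hG.diff p)]

lemma dirD_neg (v p) : dirD v (fun p => - F p) p = - dirD v F p := by
  simp [dirD, fderiv_fun_neg]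

lemma dirD_mul (hF : Sm F) (hG : Sm G) (v p) :
    dirD v (fun p => F p * G p) p = dirD v F p * G p + F p * dirD v G p := by
  simp [dirD, fderiv_fun_mul (hF.diff p) (hG.diff p)]; ring

lemma hasDerivAt_t (hF : Sm F) (t x y : ℝ) :
    HasDerivAt (fun s => F (s, x, y)) (dirD et F (t, x, y)) t := by
  have h1 : HasDerivAt (fun s : ℝ => (s, x, y)) et t :=
    (hasDerivAt_id t).prodMk (hasDerivAt_const t (x, y))
  exact (hF.diff (t, x, y)).hasFDerivAt.comp_hasDerivAt t h1

lemma hasDerivAt_x (hF : Sm F) (t x y : ℝ) :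
    HasDerivAt (fun s => F (t, s, y)) (dirD ex F (t, x, y)) x := by
  have h1 : HasDerivAt (fun s : ℝ => (t, s, y)) ex x :=
    (hasDerivAt_const x t).prodMk ((hasDerivAt_id x).prodMk (hasDerivAt_const x y))
  exact (hF.diff (t, x, y)).hasFDerivAt.comp_hasDerivAt x h1

lemma hasDerivAt_y (hF : Sm F) (t x y : ℝ) :
    HasDerivAt (fun s => F (t, x, s)) (dirD ey F (t, x, y)) y := by
  have h1 : HasDerivAt (fun s : ℝ => (t, x, s)) ey y :=
    (hasDerivAt_const y t).prodMk ((hasDerivAt_const y x).prodMk (hasDerivAt_id y))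
  exact (hF.diff (t, x, y)).hasFDerivAt.comp_hasDerivAt y h1

lemma dirD_ex_sin (p) : dirD ex (fun p => sin p.2.2) p = 0 :=
  (hasDerivAt_x sm_sin p.1 p.2.1 p.2.2).unique (hasDerivAt_const _ (sin p.2.2))

lemma dirD_ey_sin (p) : dirD ey (fun p => sin p.2.2) p = cos p.2.2 :=
  (hasDerivAt_y sm_sin p.1 p.2.1 p.2.2).unique (hasDerivAt_sin _)

lemma Per.D (hF : Per α F) (v) : Per α (dirD v F) := by
  have key : ∀ c, (∀ p, F (p + c) = F p) → ∀ p, dirD v F (p + c) = dirD v F p :=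
    fun c h p => by
      have : (fun p => F (p + c)) = F := funext h
      have h2 := fderiv_comp_add_right (𝕜 := ℝ) (f := F) (x := p) c
      rw [this] at h2
      simp [dirD, h2]
  exact ⟨key _ hF.1, key _ hF.2⟩

lemma Per.x (hF : Per α F) (t y : ℝ) : F (t, 2 * π / α, y) = F (t, 0, y) := by
  simpa using hF.1 (t, 0, y)

lemma Per.y (hF : Per α F) (t x : ℝ) : F (t, x, 2 * π) = F (t, x, 0) := by
  simpa using hF.2 (t, x, 0)

lemma Per.add (hF : Per α F) (hG : Per α G) : Per α fun p => F p + G p :=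
  ⟨fun p => by simp only [hF.1, hG.1], fun p => by simp only [hF.2, hG.2]⟩

lemma Per.sub (hF : Per α F) (hG : Per α G) : Per α fun p => F p - G p :=
  ⟨fun p => by simp only [hF.1, hG.1], fun p => by simp only [hF.2, hG.2]⟩

lemma Per.mul (hF : Per α F) (hG : Per α G) : Per α fun p => F p * G p :=
  ⟨fun p => by simp only [hF.1, hG.1], fun p => by simp only [hF.2, hG.2]⟩

lemma per_sin : Per α fun p => sin p.2.2 := ⟨fun p => by simp, fun p => by simp⟩

/-! ### Integration over the period cell -/

lemma rect_cont (hF : Continuous F) (t : ℝ) : Continuous fun q : ℝ × ℝ => F (t, q.1, q.2) :=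
  hF.comp (by fun_prop)

lemma rect_integrable (hF : Continuous F) (t : ℝ) :
    IntegrableOn (fun q : ℝ × ℝ => F (t, q.1, q.2))
      (Icc (0:ℝ) (2 * π / α) ×ˢ Icc (0:ℝ) (2 * π)) :=
  (rect_cont hF t).continuousOn.integrableOn_compact (isCompact_Icc.prod isCompact_Icc)

lemma rectInt_add (hF : Continuous F) (hG : Continuous G) (t : ℝ) :
    rectInt α (fun p => F p + G p) t = rectInt α F t + rectInt α G t :=
  integral_add (rect_integrable hF t) (rect_integrable hG t)

lemma rectInt_sub (hF : Continuous F) (hG : Continuous G) (t : ℝ) :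
    rectInt α (fun p => F p - G p) t = rectInt α F t - rectInt α G t :=
  integral_sub (rect_integrable hF t) (rect_integrable hG t)

lemma rectInt_const_mul (c t : ℝ) :
    rectInt α (fun p => c * F p) t = c * rectInt α F t :=
  integral_const_mul _ _

lemma rectInt_mono (hF : Continuous F) (hG : Continuous G) (h : ∀ p, F p ≤ G p) (t : ℝ) :
    rectInt α F t ≤ rectInt α G t :=
  integral_mono (rect_integrable hF t) (rect_integrable hG t) fun _ => h _

lemma rectInt_nonneg (h : ∀ p, 0 ≤ F p) (t : ℝ) : 0 ≤ rectInt α F t :=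
  integral_nonneg fun _ => h _

lemma rectInt_eq_xy (hα : 0 < α) (hF : Continuous F) (t : ℝ) :
    rectInt α F t = ∫ x in (0:ℝ)..(2 * π / α), ∫ y in (0:ℝ)..(2 * π), F (t, x, y) := by
  have h1 : (0:ℝ) ≤ 2 * π / α := by positivity
  have h2 : (0:ℝ) ≤ 2 * π := by positivity
  unfold rectInt
  rw [Measure.volume_eq_prod, setIntegral_prod _ (rect_integrable hF t),
    intervalIntegral.integral_of_le h1, integral_Icc_eq_integral_Ioc]
  simp_rw [intervalIntegral.integral_of_le h2, integral_Icc_eq_integral_Ioc]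

lemma rectInt_eq_yx (hα : 0 < α) (hF : Continuous F) (t : ℝ) :
    rectInt α F t = ∫ y in (0:ℝ)..(2 * π), ∫ x in (0:ℝ)..(2 * π / α), F (t, x, y) := by
  have h1 : (0:ℝ) ≤ 2 * π / α := by positivity
  have h2 : (0:ℝ) ≤ 2 * π := by positivity
  have hi : IntegrableOn (fun q : ℝ × ℝ => F (t, q.2, q.1))
      (Icc (0:ℝ) (2 * π) ×ˢ Icc (0:ℝ) (2 * π / α)) :=
    (hF.comp (by fun_prop : Continuous fun q : ℝ × ℝ => (t, q.2, q.1))).continuousOn.integrableOn_compact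
      (isCompact_Icc.prod isCompact_Icc)
  unfold rectInt
  rw [Measure.volume_eq_prod, ← setIntegral_prod_swap]
  simp only [Prod.fst_swap, Prod.snd_swap]
  rw [setIntegral_prod _ hi,
    intervalIntegral.integral_of_le h2, integral_Icc_eq_integral_Ioc]
  simp_rw [intervalIntegral.integral_of_le h1, integral_Icc_eq_integral_Ioc]

lemma integral_D_ex (hF : Sm F) (hP : Per α F) (t y : ℝ) :
    ∫ x in (0:ℝ)..(2 * π / α), dirD ex F (t, x, y) = 0 := by
  rw [intervalIntegral.integral_eq_sub_of_hasDerivAt (fun x _ => hasDerivAt_x hF t x y)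
    (((hF.D ex).continuous.comp (by fun_prop : Continuous fun x : ℝ => (t, x, y))).intervalIntegrable
      _ _), hP.x, sub_self]

lemma integral_D_ey (hF : Sm F) (hP : Per α F) (t x : ℝ) :
    ∫ y in (0:ℝ)..(2 * π), dirD ey F (t, x, y) = 0 := by
  rw [intervalIntegral.integral_eq_sub_of_hasDerivAt (fun y _ => hasDerivAt_y hF t x y)
    (((hF.D ey).continuous.comp (by fun_prop : Continuous fun y : ℝ => (t, x, y))).intervalIntegrable
      _ _), hP.y, sub_self]

lemma rectInt_D_ex (hα : 0 < α) (hF : Sm F) (hP : Per α F) (t : ℝ) :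
    rectInt α (dirD ex F) t = 0 := by
  rw [rectInt_eq_yx hα (hF.D ex).continuous]
  simp [integral_D_ex hF hP]

lemma rectInt_D_ey (hα : 0 < α) (hF : Sm F) (hP : Per α F) (t : ℝ) :
    rectInt α (dirD ey F) t = 0 := by
  rw [rectInt_eq_xy hα (hF.D ey).continuous]
  simp [integral_D_ey hF hP]

lemma hasDerivAt_rectInt (hF : Sm F) (t : ℝ) :
    HasDerivAt (rectInt α F) (rectInt α (dirD et F) t) t :=
  hasDerivAt_param (F := fun t q => F (t, q.1, q.2)) (F' := fun t q => dirD et F (t, q.1, q.2))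
    (isCompact_Icc.prod isCompact_Icc) (measurableSet_Icc.prod measurableSet_Icc)
    (fun t => rect_cont hF.continuous t) ((hF.D et).continuous.comp (by fun_prop))
    (fun t q => hasDerivAt_t hF t q.1 q.2) t

lemma hasDerivAt_line (hα : 0 < α) {f f' : ℝ → ℝ → ℝ} (hf : ∀ t, Continuous (f t))
    (hf' : Continuous fun p : ℝ × ℝ => f' p.1 p.2)
    (h : ∀ t x, HasDerivAt (fun s => f s x) (f' t x) t) (t : ℝ) :
    HasDerivAt (fun s => ∫ x in (0:ℝ)..(2 * π / α), f s x) (∫ x in (0:ℝ)..(2 * π / α), f' t x) t := by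
  have h1 : (0:ℝ) ≤ 2 * π / α := by positivity
  simp_rw [intervalIntegral.integral_of_le h1, ← integral_Icc_eq_integral_Ioc]
  exact hasDerivAt_param isCompact_Icc measurableSet_Icc hf hf' h t

lemma MeanZero.D_ey (hα : 0 < α) (hF : Sm F) (hM : MeanZero α F) : MeanZero α (dirD ey F) := by
  intro t y
  have := hasDerivAt_line hα (f := fun y x => F (t, x, y)) (f' := fun y x => dirD ey F (t, x, y))
    (fun y => hF.continuous.comp (by fun_prop)) ((hF.D ey).continuous.comp (by fun_prop))
    (fun y x => hasDerivAt_y hF t x y) y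
  refine this.unique ?_
  simp only [hM t]
  exact hasDerivAt_const _ _

/-- The evolution preserves the non-shear condition: `-sin y ∂ₓG` integrates to zero in `x`. -/
lemma meanZero_of_evol (hα : 0 < α) (hF : Sm F) (hG : Sm G) (hP : Per α G)
    (h : ∀ p, dirD et F p = -sin p.2.2 * dirD ex G p)
    (h0 : ∀ y, ∫ x in (0:ℝ)..(2 * π / α), F (0, x, y) = 0) : MeanZero α F := by
  intro t y
  have key : ∀ t, HasDerivAt (fun s => ∫ x in (0:ℝ)..(2 * π / α), F (s, x, y)) 0 t := fun t => by
    have := hasDerivAt_line hα (f := fun t x => F (t, x, y)) (f' := fun t x => dirD et F (t, x, y))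
      (fun y => hF.continuous.comp (by fun_prop)) ((hF.D et).continuous.comp (by fun_prop))
      (fun t x => hasDerivAt_t hF t x y) t
    convert this using 1
    simp only [h, intervalIntegral.integral_const_mul, integral_D_ex hG hP, mul_zero]
  refine Eq.trans ?_ (h0 y)
  exact is_const_of_deriv_eq_zero (fun t => (key t).differentiableAt) (fun t => (key t).deriv) t 0

/-! ### The energy form -/

/-- A non-shear vorticity `θ` with a stream function `φ`, i.e. `Δφ = -θ`, both smooth and periodic.
The stream function is determined only up to a function of time; no normalization is imposed, and
none is needed because `θ` has mean zero. -/
structure Pair (α : ℝ) (θ φ : ℝ × ℝ × ℝ → ℝ) : Prop where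
  sθ : Sm θ
  sφ : Sm φ
  pθ : Per α θ
  pφ : Per α φ
  mean : MeanZero α θ
  lap : ∀ p, dirD ex (dirD ex φ) p + dirD ey (dirD ey φ) p = -θ p

variable {θ φ g : ℝ × ℝ × ℝ → ℝ}

/-- Differentiating `Δφ = -θ` along `v`. -/
lemma Pair.lap_D (h : Pair α θ φ) (v p) :
    dirD ex (dirD ex (dirD v φ)) p + dirD ey (dirD ey (dirD v φ)) p = - dirD v θ p := by
  rw [dirD_comm h.sφ ex v, dirD_comm h.sφ ey v, dirD_comm (h.sφ.D ex) ex v, dirD_comm (h.sφ.D ey) ey v,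
    ← dirD_add ((h.sφ.D ex).D ex) ((h.sφ.D ey).D ey), funext h.lap, dirD_neg]

lemma Pair.D_ex (h : Pair α θ φ) : Pair α (dirD ex θ) (dirD ex φ) :=
  ⟨h.sθ.D _, h.sφ.D _, h.pθ.D _, h.pφ.D _, integral_D_ex h.sθ h.pθ, h.lap_D ex⟩

lemma Pair.D_ey (hα : 0 < α) (h : Pair α θ φ) : Pair α (dirD ey θ) (dirD ey φ) :=
  ⟨h.sθ.D _, h.sφ.D _, h.pθ.D _, h.pφ.D _, h.mean.D_ey hα h.sθ, h.lap_D ey⟩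

/-- Green's identity `∫ θφ = ∫ |∇φ|²`. -/
lemma Pair.green (hα : 0 < α) (h : Pair α θ φ) (t : ℝ) :
    rectInt α (fun p => θ p * φ p) t = rectInt α (fun p => dirD ex φ p ^ 2 + dirD ey φ p ^ 2) t := by
  have s := h.sφ
  have sx := s.D ex
  have sy := s.D ey
  have hx := rectInt_D_ex hα (s.mul sx) (h.pφ.mul (h.pφ.D ex)) t
  have hy := rectInt_D_ey hα (s.mul sy) (h.pφ.mul (h.pφ.D ey)) t
  have e : (fun p => θ p * φ p) = fun p => (dirD ex φ p ^ 2 + dirD ey φ p ^ 2) -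
      (dirD ex (fun p => φ p * dirD ex φ p) p + dirD ey (fun p => φ p * dirD ey φ p) p) := by
    funext p
    rw [dirD_mul s sx, dirD_mul s sy]
    linear_combination φ p * h.lap p
  have c1 := (Sm.D (s.mul sx) ex).continuous
  have c2 := (Sm.D (s.mul sy) ey).continuous
  have c3 := sx.continuous
  have c4 := sy.continuous
  rw [e, rectInt_sub (by fun_prop) (by fun_prop), rectInt_add c1 c2, hx, hy]
  ring

lemma Pair.le_half (hα : 0 < α) (h : Pair α θ φ) (t : ℝ) :
    rectInt α (fun p => θ p * φ p) t ≤
      rectInt α (fun p => (α ^ 2)⁻¹ / 2 * θ p ^ 2 + 1 / 2 * dirD ex φ p ^ 2) t := by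
  have c1 := h.sθ.continuous
  have c2 := h.sφ.continuous
  have c3 := (h.sφ.D ex).continuous
  rw [rectInt_eq_yx hα (by fun_prop), rectInt_eq_yx hα (by fun_prop)]
  have e : (2 * π / α / (2 * π)) ^ 2 = (α ^ 2)⁻¹ := by field_simp
  refine intervalIntegral.integral_mono (by positivity) ?_ ?_ fun y => ?_
  · exact (intervalIntegral.continuous_parametric_intervalIntegral_of_continuous' (by fun_prop)
      _ _).intervalIntegrable _ _
  · exact (intervalIntegral.continuous_parametric_intervalIntegral_of_continuous' (by fun_prop)
      _ _).intervalIntegrable _ _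
  · have := slice_bound (T := 2 * π / α) (by positivity) (θ := fun x => θ (t, x, y))
      (φ := fun x => φ (t, x, y)) (by fun_prop) (fun x => hasDerivAt_x h.sφ t x y)
      (by fun_prop) (h.pφ.x t y) (h.mean t y)
    rwa [e] at this

lemma Pair.pairing_nonneg (hα : 0 < α) (h : Pair α θ φ) (t : ℝ) :
    0 ≤ rectInt α (fun p => θ p * φ p) t := by
  rw [h.green hα]
  exact rectInt_nonneg (fun p => by positivity) t

/-- The spectral gap `∫ θφ ≤ α⁻² ∫ θ²`: by `Pair.le_half` the left side is at most
`α⁻²/2 ∫ θ² + 1/2 ∫ |∂ₓφ|²`, and `∫ |∂ₓφ|² ≤ ∫ θφ` by Green's identity. -/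
lemma Pair.pairing_le (hα : 0 < α) (h : Pair α θ φ) (t : ℝ) :
    rectInt α (fun p => θ p * φ p) t ≤ (α ^ 2)⁻¹ * rectInt α (fun p => θ p ^ 2) t := by
  have c1 := h.sθ.continuous
  have c3 := (h.sφ.D ex).continuous
  have c4 := (h.sφ.D ey).continuous
  have h1 := h.le_half hα t
  have h2 := h.green hα t
  rw [rectInt_add (by fun_prop) (by fun_prop), rectInt_const_mul, rectInt_const_mul] at h1
  rw [rectInt_add (by fun_prop) (by fun_prop)] at h2
  have h3 : 0 ≤ rectInt α (fun p => dirD ey φ p ^ 2) t := rectInt_nonneg (fun p => by positivity) t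
  linarith

/-- The quadratic form `⟨Lθ, θ⟩ = ∫ (θ² - θφ)`, where `L = 1 + Δ⁻¹` and `φ = -Δ⁻¹θ`. -/
def energy (α : ℝ) (θ φ : ℝ × ℝ × ℝ → ℝ) : ℝ → ℝ :=
  rectInt α fun p => θ p * θ p - θ p * φ p

lemma Pair.energy_eq (h : Pair α θ φ) (t : ℝ) : energy α θ φ t =
    rectInt α (fun p => θ p ^ 2) t - rectInt α (fun p => θ p * φ p) t := by
  have c1 := h.sθ.continuous
  have c2 := h.sφ.continuous
  unfold energy
  rw [rectInt_sub (by fun_prop) (by fun_prop)]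
  simp only [sq]

lemma Pair.energy_le (hα : 0 < α) (h : Pair α θ φ) (t : ℝ) :
    energy α θ φ t ≤ rectInt α (fun p => θ p ^ 2) t := by
  have := h.energy_eq t
  have := h.pairing_nonneg hα t
  linarith

lemma Pair.le_energy (hα : 0 < α) (h : Pair α θ φ) (t : ℝ) :
    (1 - (α ^ 2)⁻¹) * rectInt α (fun p => θ p ^ 2) t ≤ energy α θ φ t := by
  have := h.energy_eq t
  have := h.pairing_le hα t
  linarith

lemma Pair.grad_le (hα : 1 < α) (h : Pair α θ φ) (t : ℝ) :
    rectInt α (fun p => dirD ex φ p ^ 2) t ≤ rectInt α (fun p => θ p ^ 2) t ∧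
    rectInt α (fun p => dirD ey φ p ^ 2) t ≤ rectInt α (fun p => θ p ^ 2) t := by
  have hα0 : 0 < α := by linarith
  have c3 := (h.sφ.D ex).continuous
  have c4 := (h.sφ.D ey).continuous
  have h1 := h.pairing_le hα0 t
  have h2 := h.green hα0 t
  rw [rectInt_add (by fun_prop) (by fun_prop)] at h2
  have h3 : 0 ≤ rectInt α (fun p => dirD ey φ p ^ 2) t := rectInt_nonneg (fun p => by positivity) t
  have h4 : 0 ≤ rectInt α (fun p => dirD ex φ p ^ 2) t := rectInt_nonneg (fun p => by positivity) t
  have h5 : 0 ≤ rectInt α (fun p => θ p ^ 2) t := rectInt_nonneg (fun p => by positivity) t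
  have h6 : (α ^ 2)⁻¹ ≤ 1 := inv_le_one_of_one_le₀ (by nlinarith)
  have h7 : (α ^ 2)⁻¹ * rectInt α (fun p => θ p ^ 2) t ≤ 1 * rectInt α (fun p => θ p ^ 2) t := by
    gcongr
  constructor <;> linarith

/-! ### Evolution of the energy -/

/-- Energy identity for `∂ₜθ = JLθ + g`: since `J` is antisymmetric and `L` symmetric,
`d/dt ⟨Lθ, θ⟩ = 2⟨Lθ, g⟩`. Concretely, the difference between `∂ₜ(θ² - θφ)` and `2(θ - φ)g` is the
divergence of the periodic field `(A, B)`: the term `sin y (θ - φ)²` in `A` expresses the antisymmetry of `J`,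
and the remaining terms are Green's second identity for `φ` and `∂ₜφ`. -/
lemma Pair.hasDerivAt_energy (hα : 0 < α) (h : Pair α θ φ) (hg : Continuous g)
    (hev : ∀ p, dirD et θ p = -sin p.2.2 * (dirD ex θ p - dirD ex φ p) + g p) (t : ℝ) :
    HasDerivAt (energy α θ φ) (2 * rectInt α (fun p => (θ p - φ p) * g p) t) t := by
  have sθ := h.sθ
  have sφ := h.sφ
  have st := sφ.D et
  have sd : Sm fun p => θ p - φ p := sθ.sub sφ
  have pd := h.pθ.sub h.pφ
  have ss := sm_sin
  set A : ℝ × ℝ × ℝ → ℝ := fun p => (dirD et φ p * dirD ex φ p - φ p * dirD ex (dirD et φ) p) -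
    sin p.2.2 * ((θ p - φ p) * (θ p - φ p)) with hA
  set B : ℝ × ℝ × ℝ → ℝ := fun p => dirD et φ p * dirD ey φ p - φ p * dirD ey (dirD et φ) p with hB
  have sA : Sm A := ((st.mul (sφ.D ex)).sub (sφ.mul (st.D ex))).sub (ss.mul (sd.mul sd))
  have sB : Sm B := (st.mul (sφ.D ey)).sub (sφ.mul (st.D ey))
  have pA : Per α A := (((h.pφ.D et).mul (h.pφ.D ex)).sub (h.pφ.mul ((h.pφ.D et).D ex))).sub
    (per_sin.mul (pd.mul pd))
  have pB : Per α B := ((h.pφ.D et).mul (h.pφ.D ey)).sub (h.pφ.mul ((h.pφ.D et).D ey))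
  have hd := hasDerivAt_rectInt (α := α) ((sθ.mul sθ).sub (sθ.mul sφ)) t
  have e : dirD et (fun p => θ p * θ p - θ p * φ p) =
      fun p => 2 * ((θ p - φ p) * g p) + (dirD ex A p + dirD ey B p) := by
    funext p
    rw [dirD_sub (sθ.mul sθ) (sθ.mul sφ), dirD_mul sθ sθ, dirD_mul sθ sφ, hA, hB,
      dirD_sub ((st.mul (sφ.D ex)).sub (sφ.mul (st.D ex))) (ss.mul (sd.mul sd)),
      dirD_sub (st.mul (sφ.D ex)) (sφ.mul (st.D ex)), dirD_mul st (sφ.D ex), dirD_mul sφ (st.D ex),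
      dirD_mul ss (sd.mul sd), dirD_mul sd sd, dirD_sub sθ sφ, dirD_ex_sin,
      dirD_sub (st.mul (sφ.D ey)) (sφ.mul (st.D ey)), dirD_mul st (sφ.D ey), dirD_mul sφ (st.D ey)]
    linear_combination (2 * (θ p - φ p)) * hev p - dirD et φ p * h.lap p + φ p * h.lap_D et p
  have c1 := sθ.continuous
  have c2 := sφ.continuous
  have c3 := (sA.D ex).continuous
  have c4 := (sB.D ey).continuous
  have : rectInt α (dirD et fun p => θ p * θ p - θ p * φ p) t =
      2 * rectInt α (fun p => (θ p - φ p) * g p) t := by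
    rw [e, rectInt_add (by fun_prop) (by fun_prop), rectInt_add c3 c4, rectInt_D_ex hα sA pA,
      rectInt_D_ey hα sB pB, rectInt_const_mul]
    ring
  rw [← this]
  exact hd

lemma Pair.energy_const (hα : 0 < α) (h : Pair α θ φ)
    (hev : ∀ p, dirD et θ p = -sin p.2.2 * (dirD ex θ p - dirD ex φ p)) (t : ℝ) :
    energy α θ φ t = energy α θ φ 0 := by
  have key : ∀ t, HasDerivAt (energy α θ φ) 0 t := fun t => by
    have := h.hasDerivAt_energy (g := fun _ => 0) hα continuous_const (by simpa using hev) t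
    simpa [rectInt] using this
  exact is_const_of_deriv_eq_zero (fun t => (key t).differentiableAt) (fun t => (key t).deriv) t 0

/-- The `L²` norm of a solution stays bounded, by conservation and coercivity of the energy. -/
lemma Pair.sq_le (hα : 1 < α) (h : Pair α θ φ)
    (hev : ∀ p, dirD et θ p = -sin p.2.2 * (dirD ex θ p - dirD ex φ p)) (t : ℝ) :
    (1 - (α ^ 2)⁻¹) * rectInt α (fun p => θ p ^ 2) t ≤ rectInt α (fun p => θ p ^ 2) 0 := by
  have hα0 : 0 < α := by linarith
  have h1 := h.le_energy hα0 t
  have h2 := h.energy_const hα0 hev t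
  have h3 := h.energy_le hα0 0
  linarith

/-- Young's inequality with a bounded weight `H`. -/
lemma rectInt_young (hF : Continuous F) (hG : Continuous G) {l : ℝ} (hl : 0 < l) (t : ℝ)
    {H : ℝ × ℝ × ℝ → ℝ} (hH : Continuous H) (hH1 : ∀ p, |H p| ≤ 1) :
    2 * rectInt α (fun p => F p * (H p * G p)) t ≤
      l * rectInt α (fun p => F p ^ 2) t + l⁻¹ * rectInt α (fun p => G p ^ 2) t := by
  rw [← rectInt_const_mul, ← rectInt_const_mul, ← rectInt_const_mul,
    ← rectInt_add (by fun_prop) (by fun_prop)]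
  refine rectInt_mono (by fun_prop) (by fun_prop) (fun p => ?_) t
  have h1 : H p ^ 2 ≤ 1 := (sq_le_one_iff_abs_le_one _).2 (hH1 p)
  have h2 : 0 ≤ l⁻¹ * (l * F p - H p * G p) ^ 2 := by positivity
  have h3 : 0 ≤ l⁻¹ * ((1 - H p ^ 2) * G p ^ 2) := by
    have : 0 ≤ 1 - H p ^ 2 := by linarith
    positivity
  have h4 : l⁻¹ * l = 1 := inv_mul_cancel₀ hl.ne'
  linear_combination h2 + h3 + (l * F p ^ 2 - 2 * F p * (H p * G p)) * h4

lemma rectInt_sub_sq_le (hF : Continuous F) (hG : Continuous G) (t : ℝ) :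
    rectInt α (fun p => (F p - G p) ^ 2) t ≤
      2 * rectInt α (fun p => F p ^ 2) t + 2 * rectInt α (fun p => G p ^ 2) t := by
  rw [← rectInt_const_mul, ← rectInt_const_mul, ← rectInt_add (by fun_prop) (by fun_prop)]
  exact rectInt_mono (by fun_prop) (by fun_prop) (fun p => by nlinarith [sq_nonneg (F p + G p)]) t

/-! ### Translation from partial derivatives of curried functions -/

/-- A curried function of `t, x, y` as a function on `ℝ × ℝ × ℝ`. -/
def uncurry3 (f : ℝ → ℝ → ℝ → ℝ) : ℝ × ℝ × ℝ → ℝ := fun p => f p.1 p.2.1 p.2.2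

lemma pdx_eq {f : ℝ → ℝ → ℝ → ℝ} (hf : Sm (uncurry3 f)) (t : ℝ) :
    pdx (f t) = fun x y => dirD ex (uncurry3 f) (t, x, y) := by
  funext x y
  exact (hasDerivAt_x hf t x y).deriv

lemma pdy_eq {f : ℝ → ℝ → ℝ → ℝ} (hf : Sm (uncurry3 f)) (t : ℝ) :
    pdy (f t) = fun x y => dirD ey (uncurry3 f) (t, x, y) := by
  funext x y
  exact (hasDerivAt_y hf t x y).deriv

lemma pdt_eq {f : ℝ → ℝ → ℝ → ℝ} (hf : Sm (uncurry3 f)) :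
    pdt f = fun t x y => dirD et (uncurry3 f) (t, x, y) := by
  funext t x y
  exact (hasDerivAt_t hf t x y).deriv

lemma plap_eq {f : ℝ → ℝ → ℝ → ℝ} (hf : Sm (uncurry3 f)) (t x y : ℝ) :
    plap (f t) x y = dirD ex (dirD ex (uncurry3 f)) (t, x, y) +
      dirD ey (dirD ey (uncurry3 f)) (t, x, y) := by
  unfold plap
  rw [pdx_eq hf, pdy_eq hf]
  exact congrArg₂ (· + ·) (hasDerivAt_x (hf.D ex) t x y).deriv (hasDerivAt_y (hf.D ey) t x y).deriv

lemma per_uncurry3 {α : ℝ} {f : ℝ → ℝ → ℝ → ℝ} (h : ∀ t, Periodic2 α (f t)) :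
    Per α (uncurry3 f) :=
  ⟨fun p => by simp [uncurry3, (h p.1).1], fun p => by simp [uncurry3, (h p.1).2]⟩

lemma H1normSq_eq {α : ℝ} (hα : 0 < α) {f : ℝ → ℝ → ℝ → ℝ} (hf : Sm (uncurry3 f)) (t : ℝ) :
    H1normSq α (f t) = rectInt α (fun p => uncurry3 f p ^ 2) t +
      rectInt α (fun p => dirD ex (uncurry3 f) p ^ 2) t +
      rectInt α (fun p => dirD ey (uncurry3 f) p ^ 2) t := by
  have c1 := hf.continuous
  have c2 := (hf.D ex).continuous
  have c3 := (hf.D ey).continuous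
  rw [← rectInt_add (by fun_prop) (by fun_prop), ← rectInt_add (by fun_prop) (by fun_prop),
    rectInt_eq_xy hα (by fun_prop)]
  unfold H1normSq integT
  rw [pdx_eq hf, pdy_eq hf]
  rfl

/-! ### Growth of the H¹ norm -/

/-- A Gronwall-type estimate: `F' ≤ 2k√F` makes `√F` grow at most linearly, at rate `k`. -/
lemma sqrt_growth {F F' : ℝ → ℝ} {k : ℝ} (hF : ∀ t, HasDerivAt F (F' t) t) (hpos : ∀ t, 0 < F t)
    (h : ∀ t, F' t ≤ 2 * k * √(F t)) {t : ℝ} (ht : 0 ≤ t) : √(F t) ≤ √(F 0) + k * t := by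
  have hd : ∀ s, HasDerivAt (fun s => √(F s) - k * s) (F' s / (2 * √(F s)) - k * 1) s := fun s =>
    ((hF s).sqrt (hpos s).ne').sub ((hasDerivAt_id s).const_mul k)
  have anti : Antitone fun s => √(F s) - k * s :=
    antitone_of_hasDerivAt_nonpos hd fun s => by
      have h1 : 0 < √(F s) := Real.sqrt_pos.2 (hpos s)
      have h2 : F' s / (2 * √(F s)) ≤ k := by
        rw [div_le_iff₀ (by positivity)]
        linarith [h s]
      simp only [Pi.zero_apply]
      linarith
  have := anti ht
  simp only [mul_zero, sub_zero] at this
  linarith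

/-- The growth estimate in squared form, for any positive upper bound `H` of the initial `H¹` norm.
Positivity of `H` keeps `F = ⟨L∂_yω, ∂_yω⟩ + H²` away from zero, so that `√F` is differentiable. -/
lemma H1_sq_bound {α : ℝ} (hα : 1 < α) {W P : ℝ × ℝ × ℝ → ℝ} (h : Pair α W P)
    (hev : ∀ p, dirD et W p = -sin p.2.2 * (dirD ex W p - dirD ex P p)) {H : ℝ} (hH : 0 < H)
    (h0 : rectInt α (fun p => W p ^ 2) 0 + rectInt α (fun p => dirD ex W p ^ 2) 0 +
      rectInt α (fun p => dirD ey W p ^ 2) 0 ≤ H ^ 2) {t : ℝ} (ht : 0 ≤ t) :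
    rectInt α (fun p => W p ^ 2) t + rectInt α (fun p => dirD ex W p ^ 2) t +
      rectInt α (fun p => dirD ey W p ^ 2) t ≤
      (2 + (2 + 4 / (1 - (α ^ 2)⁻¹)) ^ 2) / (1 - (α ^ 2)⁻¹) * (1 + t) ^ 2 * H ^ 2 := by
  have hα0 : 0 < α := by linarith
  set δ := 1 - (α ^ 2)⁻¹ with hδ
  have hδ0 : 0 < δ := by
    have : (α ^ 2)⁻¹ < 1 := inv_lt_one_of_one_lt₀ (by nlinarith)
    linarith
  have sW := h.sθ
  have sP := h.sφ
  have ssin := sm_sin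
  have sd : Sm fun p => dirD ex W p - dirD ex P p := (sW.D ex).sub (sP.D ex)
  have n1 : 0 ≤ rectInt α (fun p => W p ^ 2) 0 := rectInt_nonneg (fun p => by positivity) 0
  have n2 : 0 ≤ rectInt α (fun p => dirD ex W p ^ 2) 0 := rectInt_nonneg (fun p => by positivity) 0
  have n3 : 0 ≤ rectInt α (fun p => dirD ey W p ^ 2) 0 := rectInt_nonneg (fun p => by positivity) 0
  -- The `x`-derivative solves the same equation, since the coefficient depends on `y` only.
  have evx : ∀ p, dirD et (dirD ex W) p =
      -sin p.2.2 * (dirD ex (dirD ex W) p - dirD ex (dirD ex P) p) := fun p => by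
    rw [dirD_comm sW, show dirD et W = fun p => -(sin p.2.2 * (dirD ex W p - dirD ex P p)) from
      funext fun p => by rw [hev]; ring, dirD_neg, dirD_mul ssin sd, dirD_sub (sW.D ex) (sP.D ex), dirD_ex_sin]
    ring
  -- For the `y`-derivative the commutator with `sin y` leaves the source `-cos y (∂ₓω - ∂ₓψ)`.
  have evy : ∀ p, dirD et (dirD ey W) p =
      -sin p.2.2 * (dirD ex (dirD ey W) p - dirD ex (dirD ey P) p) +
        -cos p.2.2 * (dirD ex W p - dirD ex P p) := fun p => by
    rw [dirD_comm sW, show dirD et W = fun p => -(sin p.2.2 * (dirD ex W p - dirD ex P p)) from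
      funext fun p => by rw [hev]; ring, dirD_neg, dirD_mul ssin sd, dirD_sub (sW.D ex) (sP.D ex), dirD_ey_sin,
      dirD_comm sW ey ex, dirD_comm sP ey ex]
    ring
  have hx := h.D_ex
  have hy := h.D_ey hα0
  have bW : ∀ s, rectInt α (fun p => W p ^ 2) s ≤ H ^ 2 / δ := fun s => by
    rw [le_div_iff₀ hδ0]; linarith [h.sq_le hα hev s]
  have bX : ∀ s, rectInt α (fun p => dirD ex W p ^ 2) s ≤ H ^ 2 / δ := fun s => by
    rw [le_div_iff₀ hδ0]; linarith [hx.sq_le hα evx s]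
  set K : ℝ := 4 / δ with hK
  have hK0 : 0 < K := by positivity
  have cos_c : Continuous fun p : ℝ × ℝ × ℝ => -cos p.2.2 := by fun_prop
  have hE := hy.hasDerivAt_energy (g := fun p => -cos p.2.2 * (dirD ex W p - dirD ex P p)) hα0
    (cos_c.mul sd.continuous) evy
  set F : ℝ → ℝ := fun s => energy α (dirD ey W) (dirD ey P) s + H ^ 2 with hF
  have bY : ∀ s, δ * rectInt α (fun p => dirD ey W p ^ 2) s + H ^ 2 ≤ F s := fun s => by
    have := hy.le_energy hα0 s
    simp only [hF]; linarith
  have nY : ∀ s, 0 ≤ rectInt α (fun p => dirD ey W p ^ 2) s :=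
    fun s => rectInt_nonneg (fun p => by positivity) s
  have Fpos : ∀ s, 0 < F s := fun s => by
    have := mul_nonneg hδ0.le (nY s)
    have := bY s
    have : 0 < H ^ 2 := by positivity
    linarith
  have hbound : ∀ s, 2 * rectInt α (fun p => (dirD ey W p - dirD ey P p) *
      (-cos p.2.2 * (dirD ex W p - dirD ex P p))) s ≤ 2 * (K * H) * √(F s) := fun s => by
    have hs : 0 < √(F s) := Real.sqrt_pos.2 (Fpos s)
    -- The weight `H / √F` balances the two terms of Young's inequality.
    have y := rectInt_young (α := α) (hy.sθ.sub hy.sφ).continuous sd.continuous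
      (l := H / √(F s)) (by positivity) s cos_c (fun p => by simpa using abs_cos_le_one p.2.2)
    have a := rectInt_sub_sq_le (α := α) hy.sθ.continuous hy.sφ.continuous s
    have b := rectInt_sub_sq_le (α := α) hx.sθ.continuous hx.sφ.continuous s
    have g := h.grad_le hα s
    have a' : rectInt α (fun p => (dirD ey W p - dirD ey P p) ^ 2) s ≤ K * F s := by
      have e : K * F s = 4 * (F s / δ) := by rw [hK]; ring
      have e1 : rectInt α (fun p => dirD ey W p ^ 2) s + H ^ 2 / δ ≤ F s / δ := by
        rw [le_div_iff₀ hδ0, add_mul, div_mul_cancel₀ _ hδ0.ne']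
        linarith [bY s]
      rw [e]
      linarith [bW s, nY s, div_pos (Fpos s) hδ0]
    have b' : rectInt α (fun p => (dirD ex W p - dirD ex P p) ^ 2) s ≤ K * H ^ 2 := by
      have e : K * H ^ 2 = 4 * (H ^ 2 / δ) := by rw [hK]; ring
      rw [e]
      linarith [bW s, bX s]
    have a'' := mul_le_mul_of_nonneg_left a' (by positivity : 0 ≤ H / √(F s))
    have b'' := mul_le_mul_of_nonneg_left b' (by positivity : 0 ≤ (H / √(F s))⁻¹)
    have e1 : H / √(F s) * (K * F s) = K * H * √(F s) := by
      nth_rewrite 2 [← Real.mul_self_sqrt (Fpos s).le]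
      field_simp
    have e2 : (H / √(F s))⁻¹ * (K * H ^ 2) = K * H * √(F s) := by
      field_simp
    rw [e1] at a''
    rw [e2] at b''
    linarith
  have G := sqrt_growth (F := F) (k := K * H) (fun s => (hE s).add_const _) Fpos hbound ht
  have F0 : √(F 0) ≤ 2 * H := by
    refine Real.sqrt_le_iff.2 ⟨by positivity, ?_⟩
    have := hy.energy_le hα0 0
    simp only [hF]
    nlinarith
  have Ft : F t ≤ (2 + K) ^ 2 * (1 + t) ^ 2 * H ^ 2 := by
    have h1 : √(F t) ≤ (2 + K) * (1 + t) * H := by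
      have : 0 ≤ (2 * t + K) * H := by positivity
      linarith
    have h2 := pow_le_pow_left₀ (Real.sqrt_nonneg _) h1 2
    rw [Real.sq_sqrt (Fpos t).le] at h2
    linarith
  have Yt : rectInt α (fun p => dirD ey W p ^ 2) t ≤ F t / δ := by
    rw [le_div_iff₀ hδ0]; linarith [bY t, sq_nonneg H]
  have h1 : H ^ 2 ≤ (1 + t) ^ 2 * H ^ 2 :=
    le_mul_of_one_le_left (sq_nonneg H) (one_le_pow₀ (by linarith))
  calc _ ≤ (2 * H ^ 2 + F t) / δ := by rw [add_div, mul_div_assoc]; linarith [bW t, bX t]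
    _ ≤ (2 * ((1 + t) ^ 2 * H ^ 2) + (2 + K) ^ 2 * (1 + t) ^ 2 * H ^ 2) / δ := by gcongr
    _ = _ := by ring

end

/-- **Linear growth of the H¹ norm for the linearized Euler equation** (Lemma 2.3). -/
theorem linearized_euler_H1_growth (α : ℝ) (hα : 1 < α) :
    ∃ C > 0, ∀ ω ψ : ℝ → ℝ → ℝ → ℝ,
      IsLinEulerSol α ω ψ → NonShear α (ω 0) →
      ∀ t ≥ (0:ℝ),
        Real.sqrt (H1normSq α (ω t)) ≤ C * (1 + t) * Real.sqrt (H1normSq α (ω 0)) := by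
  have hα0 : 0 < α := by linarith
  set M : ℝ := (2 + (2 + 4 / (1 - (α ^ 2)⁻¹)) ^ 2) / (1 - (α ^ 2)⁻¹) with hM
  have hM0 : 0 < M := by
    have : (α ^ 2)⁻¹ < 1 := inv_lt_one_of_one_lt₀ (by nlinarith)
    have : 0 < 1 - (α ^ 2)⁻¹ := by linarith
    positivity
  refine ⟨√M, Real.sqrt_pos.2 hM0, fun ω ψ hsol hns t ht => ?_⟩
  obtain ⟨sW, sP, perW, hstr, hev⟩ := hsol
  replace sW : Sm (uncurry3 ω) := sW
  replace sP : Sm (uncurry3 ψ) := sP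
  have pW := per_uncurry3 perW
  have pP := per_uncurry3 fun t => (hstr t).1
  have ev : ∀ p, dirD et (uncurry3 ω) p =
      -sin p.2.2 * (dirD ex (uncurry3 ω) p - dirD ex (uncurry3 ψ) p) := fun p => by
    have := hev p.1 p.2.1 p.2.2
    rwa [pdt_eq sW, pdx_eq sW, pdx_eq sP] at this
  have pair : Pair α (uncurry3 ω) (uncurry3 ψ) := by
    refine ⟨sW, sP, pW, pP, ?_, fun p => ?_⟩
    · exact meanZero_of_evol hα0 sW (sW.sub sP) (pW.sub pP)
        (fun p => by rw [ev, dirD_sub sW sP]) hns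
    · have := (hstr p.1).2.2 p.2.1 p.2.2
      rwa [plap_eq sP] at this
  -- Replacing the initial norm by an arbitrary larger number keeps it away from zero.
  refine le_of_forall_pos_le_add fun ε hε => ?_
  have hc : 0 < √M * (1 + t) := by have := Real.sqrt_pos.2 hM0; positivity
  have hH0 := Real.sqrt_nonneg (H1normSq α (ω 0))
  set H : ℝ := √(H1normSq α (ω 0)) + ε / (√M * (1 + t)) with hH
  have hHpos : 0 < H := by positivity
  have hb := H1_sq_bound hα pair ev hHpos (by
    rw [← H1normSq_eq hα0 sW]
    exact (Real.sqrt_le_left hHpos.le).1 (le_add_of_nonneg_right (by positivity))) ht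
  rw [← H1normSq_eq hα0 sW, ← hM] at hb
  calc √(H1normSq α (ω t)) ≤ √M * (1 + t) * H := by
        refine Real.sqrt_le_iff.2 ⟨by positivity, hb.trans_eq ?_⟩
        rw [mul_pow, mul_pow, Real.sq_sqrt hM0.le]
    _ = _ := by rw [hH, mul_add, mul_div_cancel₀ _ hc.ne']
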